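/- (Optimal-value gap bound.) Let M = (T,R) and M̄ = (T',R') be two finite discounted MDPs on (S, A, γ) whose rewards are both nonnegative (R s a ≥ 0 and R' s a ≥ 0 for all (s,a)). Then for every state s0 ∈ S, the optimal values satisfy |V*_M(s0) − V*_{M̄}(s0)| ≤ max_{a∈A} Δ_{s0,a}(M, M̄). -/

import Mathlib

open Finset

variable {S A : Type*}

/-- Max over the (finite, nonempty) action space. -/
noncomputable def qmax [Fintype A] [Nonempty A] (f : A → ℝ) : ℝ :=
  Finset.univ.sup' Finset.univ_nonempty f

/-- Bellman operator `Γ_M` of the MDP `M = (T, R)` with discount `γ`. -/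
noncomputable def bellman [Fintype S] [Fintype A] [Nonempty A]
    (γ : ℝ) (T : S → A → S → ℝ) (R : S → A → ℝ)
    (f : S → A → ℝ) : S → A → ℝ :=
  fun s a => R s a + γ * ∑ s' : S, T s a s' * qmax (f s')

/-- `D_{s,a}(M‖M̄)`, where `Vbar` is the optimal value function of `M̄`. -/
noncomputable def Dop [Fintype S]
    (γ : ℝ) (T : S → A → S → ℝ) (R : S → A → ℝ)
    (T' : S → A → S → ℝ) (R' : S → A → ℝ) (Vbar : S → ℝ) : S → A → ℝ :=
  fun s a => |R s a - R' s a| + γ * ∑ s' : S, Vbar s' * |T s a s' - T' s a s'|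

/-- The operator `L_{M‖M̄}`, where `Vbar` is the optimal value function of `M̄`. -/
noncomputable def Lop [Fintype S] [Fintype A] [Nonempty A]
    (γ : ℝ) (T : S → A → S → ℝ) (R : S → A → ℝ)
    (T' : S → A → S → ℝ) (R' : S → A → ℝ) (Vbar : S → ℝ)
    (f : S → A → ℝ) : S → A → ℝ :=
  fun s a => Dop γ T R T' R' Vbar s a + γ * ∑ s' : S, T s a s' * qmax (f s')

theorem aux_nonneg [Fintype S] [Nonempty S] [Fintype A] [Nonempty A] (γ : ℝ) (hγ1 : γ < 1)
    (g : S → A → ℝ) (h : ∀ c : ℝ, (∀ s a, c ≤ g s a) → ∀ s a, γ * c ≤ g s a) :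
    ∀ s a, 0 ≤ g s a := by
  obtain ⟨⟨s1, a1⟩, hm⟩ := Finite.exists_min (fun p : S × A => g p.1 p.2)
  have h1 := h (g s1 a1) (fun s a => hm (s, a)) s1 a1
  have h2 : 0 ≤ g s1 a1 := by nlinarith
  exact fun s a => h2.trans (hm (s, a))

theorem aux_le_qmax [Fintype A] [Nonempty A] (f : A → ℝ) (a : A) : f a ≤ qmax f :=
  Finset.le_sup' f (Finset.mem_univ a)

theorem aux_qmax_le [Fintype A] [Nonempty A] (f : A → ℝ) (c : ℝ) (h : ∀ a, f a ≤ c) :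
    qmax f ≤ c :=
  Finset.sup'_le _ _ (fun a _ => h a)

theorem aux_abs [Fintype A] [Nonempty A] (f g d : A → ℝ) (c : ℝ)
    (h : ∀ a, |f a - g a| ≤ d a - c) : |qmax f - qmax g| ≤ qmax d - c := by
  have h1 : qmax f ≤ qmax g + (qmax d - c) := aux_qmax_le _ _ fun a => by
    have := (abs_le.mp (h a)).2
    linarith [aux_le_qmax g a, aux_le_qmax d a]
  have h2 : qmax g ≤ qmax f + (qmax d - c) := aux_qmax_le _ _ fun a => by
    have := (abs_le.mp (h a)).1
    linarith [aux_le_qmax f a, aux_le_qmax d a]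
  exact abs_le.mpr ⟨by linarith, by linarith⟩

theorem aux_main [Fintype S] [Nonempty S] [Fintype A] [Nonempty A]
    (γ : ℝ) (hγ0 : 0 ≤ γ) (hγ1 : γ < 1)
    (T : S → A → S → ℝ) (R : S → A → ℝ)
    (T' : S → A → S → ℝ) (R' : S → A → ℝ)
    (hT : ∀ s a s', 0 ≤ T s a s') (hTsum : ∀ s a, ∑ s' : S, T s a s' = 1)
    (hT' : ∀ s a s', 0 ≤ T' s a s') (hTsum' : ∀ s a, ∑ s' : S, T' s a s' = 1)
    (hR' : ∀ s a, 0 ≤ R' s a)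
    (Q : S → A → ℝ) (hQ : ∀ s a, Q s a = bellman γ T R Q s a)
    (Q' : S → A → ℝ) (hQ' : ∀ s a, Q' s a = bellman γ T' R' Q' s a)
    (d : S → A → ℝ)
    (hd : ∀ s a, d s a = Lop γ T R T' R' (fun s => qmax (Q' s)) d s a) (s : S) (a : A) :
    |Q s a - Q' s a| ≤ d s a := by
  have hQ0 : ∀ s a, 0 ≤ Q' s a := by
    apply aux_nonneg γ hγ1
    intro c hc s a
    rw [hQ' s a, bellman]
    have : c ≤ ∑ s' : S, T' s a s' * qmax (Q' s') := by
      calc c = ∑ s' : S, T' s a s' * c := by rw [← Finset.sum_mul, hTsum', one_mul]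
        _ ≤ _ := Finset.sum_le_sum fun s' _ => mul_le_mul_of_nonneg_left
          ((hc s' (Classical.arbitrary A)).trans (aux_le_qmax _ _)) (hT' s a s')
    have := mul_le_mul_of_nonneg_left this hγ0
    linarith [hR' s a]
  have hV0 : ∀ s, 0 ≤ qmax (Q' s) := fun s =>
    (hQ0 s (Classical.arbitrary A)).trans (aux_le_qmax _ _)
  have key : ∀ s a, 0 ≤ d s a - |Q s a - Q' s a| := by
    apply aux_nonneg γ hγ1 (fun s a => d s a - |Q s a - Q' s a|)
    intro c hc s a
    have hV : ∀ s', |qmax (Q s') - qmax (Q' s')| ≤ qmax (d s') - c := fun s' =>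
      aux_abs _ _ _ _ fun a => by linarith [hc s' a]
    have hsum : |∑ s' : S, T s a s' * qmax (Q s') - ∑ s' : S, T' s a s' * qmax (Q' s')| ≤
        ∑ s' : S, T s a s' * qmax (d s') - c
          + ∑ s' : S, qmax (Q' s') * |T s a s' - T' s a s'| := by
      have e : ∑ s' : S, T s a s' * qmax (d s') - c
          + ∑ s' : S, qmax (Q' s') * |T s a s' - T' s a s'|
          = ∑ s' : S, (T s a s' * (qmax (d s') - c)
            + qmax (Q' s') * |T s a s' - T' s a s'|) := by
        simp only [mul_sub, Finset.sum_add_distrib, Finset.sum_sub_distrib]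
        rw [← Finset.sum_mul, hTsum, one_mul]
      rw [e, ← Finset.sum_sub_distrib]
      refine (Finset.abs_sum_le_sum_abs _ _).trans (Finset.sum_le_sum fun s' _ => ?_)
      have e2 : T s a s' * qmax (Q s') - T' s a s' * qmax (Q' s')
        = T s a s' * (qmax (Q s') - qmax (Q' s'))
          + qmax (Q' s') * (T s a s' - T' s a s') := by ring
      rw [e2]
      refine (abs_add_le _ _).trans ?_
      rw [abs_mul, abs_mul, abs_of_nonneg (hT s a s'), abs_of_nonneg (hV0 s')]
      linarith [mul_le_mul_of_nonneg_left (hV s') (hT s a s')]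
    have h3 := mul_le_mul_of_nonneg_left hsum hγ0
    have h4 : |Q s a - Q' s a| ≤ |R s a - R' s a| +
        γ * |∑ s' : S, T s a s' * qmax (Q s') - ∑ s' : S, T' s a s' * qmax (Q' s')| := by
      rw [hQ s a, hQ' s a, bellman, bellman]
      nth_rewrite 3 [← abs_of_nonneg hγ0]
      rw [← abs_mul]
      refine le_trans (le_of_eq ?_) (abs_add_le _ _)
      congr 1
      ring
    have h5 := hd s a
    simp only [Lop, Dop] at h5
    show γ * c ≤ d s a - |Q s a - Q' s a|
    linarith
  linarith [key s a]

/-- Optimal-value gap bound: `|V*_M(s0) − V*_{M̄}(s0)| ≤ max_{a} Δ_{s0,a}(M, M̄)`. -/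
theorem optimal_value_gap_bound
    [Fintype S] [Nonempty S] [Fintype A] [Nonempty A]
    (γ : ℝ) (hγ0 : 0 ≤ γ) (hγ1 : γ < 1)
    (T : S → A → S → ℝ) (R : S → A → ℝ)
    (T' : S → A → S → ℝ) (R' : S → A → ℝ)
    (hT : ∀ s a s', 0 ≤ T s a s') (hTsum : ∀ s a, ∑ s' : S, T s a s' = 1)
    (hT' : ∀ s a s', 0 ≤ T' s a s') (hTsum' : ∀ s a, ∑ s' : S, T' s a s' = 1)
    (hR : ∀ s a, 0 ≤ R s a) (hR' : ∀ s a, 0 ≤ R' s a)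
    -- `QstarM` and `Qstarbar` are the (unique) fixed points of the Bellman operators of
    -- `M = (T, R)` and `M̄ = (T', R')`, giving `V*_M = fun s => qmax (QstarM s)` etc.
    (QstarM : S → A → ℝ) (hQstarM : ∀ s a, QstarM s a = bellman γ T R QstarM s a)
    (Qstarbar : S → A → ℝ)
    (hQstarbar : ∀ s a, Qstarbar s a = bellman γ T' R' Qstarbar s a)
    -- `d1 = d(M‖M̄)` and `d2 = d(M̄‖M)` are the (unique) fixed points of `L_{M‖M̄}` and
    -- `L_{M̄‖M}`; the pseudo-metric is `Δ_{s,a}(M,M̄) = min (d1 s a) (d2 s a)`.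
    (d1 : S → A → ℝ)
    (hd1 : ∀ s a, d1 s a = Lop γ T R T' R' (fun s => qmax (Qstarbar s)) d1 s a)
    (d2 : S → A → ℝ)
    (hd2 : ∀ s a, d2 s a = Lop γ T' R' T R (fun s => qmax (QstarM s)) d2 s a)
    (s0 : S) :
    |qmax (QstarM s0) - qmax (Qstarbar s0)| ≤
      qmax (fun a => min (d1 s0 a) (d2 s0 a)) := by
  have h1 := aux_main γ hγ0 hγ1 T R T' R' hT hTsum hT' hTsum' hR' QstarM hQstarM
    Qstarbar hQstarbar d1 hd1
  have h2 := aux_main γ hγ0 hγ1 T' R' T R hT' hTsum' hT hTsum hR Qstarbar hQstarbar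
    QstarM hQstarM d2 hd2
  have := aux_abs (QstarM s0) (Qstarbar s0) (fun a => min (d1 s0 a) (d2 s0 a)) 0 (fun a => by
    rw [sub_zero]
    refine le_min (h1 s0 a) ?_
    rw [abs_sub_comm]
    exact h2 s0 a)
  rwa [sub_zero] at this
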